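/- The free pre-Lie algebra pL(V) on a vector space V is naturally isomorphic to the space Tr(V) = ⊕_{n≥1} Span_k(Tr_n) ⊗_{Σ_n} V^{⊗n} of rooted trees with vertices decorated by elements of V, where the pre-Lie product is given by the sum over all vertex insertions (Chapoton–Livernet). -/

import Mathlib

/-!
The span `Tr(V)` of decorated trees is governed by its node operations
`nodeT v [x₁, …, xₙ]` (a root decorated by `v` with branches `xᵢ`), which are symmetric
and multilinear in the branches, linear in `v`, generate `Tr(V)`, and are universal with
these properties (`exists_fold`, `nodeT_induction`). Grafting is the product determined by
`nodeT v l ⋆ y = nodeT v (y :: l) + ∑ᵢ nodeT v (…, xᵢ ⋆ y, …)`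
(`graftR_nodeT`, identified with the formal sum `graftF` in `graftR_cls`). The last sum is
the action on `l` of the derivation extending `x ↦ x ⋆ y`, and the commutator formula for
derivations (`derivL_comm`) gives the pre-Lie identity by induction on trees
(`mulT_preLie`).

Solved for its first term on the right, the same recursion expresses a node through
products of nodes of smaller root degree. In `Tr(V)` this shows that the one-vertex trees
generate (`end_eq_id`). In an arbitrary pre-Lie algebra it defines the symmetric braces
`x{y₁, …, yₙ}` (of Guin and Oudom), whose symmetry (`permInv_brace`) follows from the
pre-Lie identity and, again, the commutator formula. Evaluating each vertex of a tree as a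
brace yields the extension of a linear map `V → Q` to a morphism `Tr(V) → Q`
(`exists_lift`). Hence `Tr(V)` has the universal property of the free pre-Lie algebra, and
the morphisms in the two directions between it and `P` are mutually inverse.
-/

/-- The universal property of the free pre-Lie algebra on a vector space `V`:
`P` with pre-Lie product `mul` and structure map `ι` is free if every linear map
from `V` to a pre-Lie algebra extends uniquely to a product-preserving linear map. -/
structure IsFreePreLie (k : Type) [Field k] (V : Type) [AddCommGroup V] [Module k V]
    (P : Type) [AddCommGroup P] [Module k P]
    (mul : P →ₗ[k] P →ₗ[k] P) (ι : V →ₗ[k] P) : Prop where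
  preLie : ∀ x y z : P,
    mul (mul x y) z - mul x (mul y z) = mul (mul x z) y - mul x (mul z y)
  lift : ∀ (Q : Type) [AddCommGroup Q] [Module k Q] (m : Q →ₗ[k] Q →ₗ[k] Q),
    (∀ x y z : Q, m (m x y) z - m x (m y z) = m (m x z) y - m x (m z y)) →
    ∀ f : V →ₗ[k] Q, ∃! g : P →ₗ[k] Q,
      (∀ v, g (ι v) = f v) ∧ ∀ x y, g (mul x y) = m (g x) (g y)

/-- The Lie subalgebra (as a subspace) generated by the image of `ι`, for the
commutator bracket of `mul`. -/
def lieClosure {k : Type} [Field k] {V : Type} [AddCommGroup V] [Module k V]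
    {P : Type} [AddCommGroup P] [Module k P]
    (mul : P →ₗ[k] P →ₗ[k] P) (ι : V →ₗ[k] P) : Submodule k P :=
  sInf {W : Submodule k P |
    (∀ v : V, ι v ∈ W) ∧ ∀ x ∈ W, ∀ y ∈ W, mul x y - mul y x ∈ W}

/-- Planar rooted trees with vertices decorated by elements of `V`. -/
inductive PTree (V : Type) : Type
  | node : V → List (PTree V) → PTree V

mutual
  /-- Grafting of a decorated tree `s` onto each vertex of another tree:
  `graftF k s t` is the formal sum over all vertices of `t` of the tree obtained
  by attaching the root of `s` to that vertex by a new edge. -/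
  noncomputable def graftF (k : Type) [Field k] {V : Type} (s : PTree V) :
      PTree V → (PTree V →₀ k)
    | .node v ts =>
        Finsupp.single (.node v (s :: ts)) 1
          + graftL k s ts (fun l => PTree.node v l)
  /-- Auxiliary grafting along a list of subtrees within a context. -/
  noncomputable def graftL (k : Type) [Field k] {V : Type} (s : PTree V) :
      List (PTree V) → (List (PTree V) → PTree V) → (PTree V →₀ k)
    | [], _ => 0
    | t :: rest, ctx =>
        Finsupp.mapDomain (fun t' => ctx (t' :: rest)) (graftF k s t)
          + graftL k s rest (fun l => ctx (t :: l))
end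

/-- The relations presenting `Tr(V) = ⊕ₙ Span(Trₙ) ⊗_{Σₙ} V^{⊗n}` from the span of
planar `V`-decorated trees: reordering of the children of any vertex (the
`Σₙ`-coinvariants, i.e. trees are non-planar) and multilinearity of decorations,
propagated to all subtree positions. -/
inductive TreeRel (k V : Type) [Field k] [AddCommGroup V] [Module k V] :
    (PTree V →₀ k) → (PTree V →₀ k) → Prop
  | swap (v : V) (l₁ l₂ : List (PTree V)) (t t' : PTree V) :
      TreeRel k V (Finsupp.single (.node v (l₁ ++ t :: t' :: l₂)) 1)
        (Finsupp.single (.node v (l₁ ++ t' :: t :: l₂)) 1)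
  | smul_label (a : k) (v : V) (ts : List (PTree V)) :
      TreeRel k V (Finsupp.single (.node (a • v) ts) 1)
        (a • Finsupp.single (.node v ts) 1)
  | add_label (v w : V) (ts : List (PTree V)) :
      TreeRel k V (Finsupp.single (.node (v + w) ts) 1)
        (Finsupp.single (.node v ts) 1 + Finsupp.single (.node w ts) 1)
  | congr (x y : PTree V →₀ k) (v : V) (l₁ l₂ : List (PTree V)) :
      TreeRel k V x y →
      TreeRel k V (Finsupp.mapDomain (fun t => PTree.node v (l₁ ++ t :: l₂)) x)
        (Finsupp.mapDomain (fun t => PTree.node v (l₁ ++ t :: l₂)) y)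

/-- The subspace of relations. -/
noncomputable def treeRelSub (k V : Type) [Field k] [AddCommGroup V] [Module k V] :
    Submodule k (PTree V →₀ k) :=
  Submodule.span k {z | ∃ x y, TreeRel k V x y ∧ z = x - y}

/-- The space `Tr(V)` of `V`-decorated rooted trees. -/
noncomputable abbrev TrSpace (k V : Type) [Field k] [AddCommGroup V] [Module k V] :=
  (PTree V →₀ k) ⧸ treeRelSub k V

namespace FreePreLie

/-! ### Multilinear functions of lists and derivations -/

/-- `φ : List M → N` is linear in every entry of its argument: it is multilinear on
lists of each fixed length. -/
structure SlotLin (k : Type) [Field k] {M N : Type} [AddCommGroup M] [Module k M]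
    [AddCommGroup N] [Module k N] (φ : List M → N) : Prop where
  add : ∀ l₁ l₂ x y, φ (l₁ ++ (x + y) :: l₂) = φ (l₁ ++ x :: l₂) + φ (l₁ ++ y :: l₂)
  smul : ∀ (a : k) l₁ l₂ x, φ (l₁ ++ (a • x) :: l₂) = a • φ (l₁ ++ x :: l₂)

/-- `φ` does not depend on the order of the entries of its argument. -/
def PermInv {M N : Type} (φ : List M → N) : Prop :=
  ∀ l l' : List M, l.Perm l' → φ l = φ l'

theorem PermInv.cons {M N : Type} {φ : List M → N} (h : PermInv φ) (x : M) :
    PermInv (fun l => φ (x :: l)) := fun _ _ hl => h _ _ (hl.cons x)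

/-- The sum over all positions `i` of `φ` evaluated at `l` with its `i`-th entry `x`
replaced by `δ x`. -/
def derivL {M N : Type} [AddCommGroup N] (δ : M → M) : (List M → N) → List M → N
  | _, [] => 0
  | φ, x :: l => φ (δ x :: l) + derivL δ (fun l' => φ (x :: l')) l

section
variable {k : Type} [Field k] {M N N' : Type} [AddCommGroup M] [Module k M]
  [AddCommGroup N] [Module k N] [AddCommGroup N'] [Module k N']

theorem SlotLin.cons {φ : List M → N} (h : SlotLin k φ) (x : M) :
    SlotLin k (fun l => φ (x :: l)) :=
  ⟨fun l₁ l₂ y z => h.add (x :: l₁) l₂ y z, fun a l₁ l₂ y => h.smul a (x :: l₁) l₂ y⟩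

theorem SlotLin.append_left {φ : List M → N} (h : SlotLin k φ) (l : List M) :
    SlotLin k (fun l' => φ (l ++ l')) :=
  ⟨fun l₁ l₂ y z => by simpa using h.add (l ++ l₁) l₂ y z,
   fun a l₁ l₂ y => by simpa using h.smul a (l ++ l₁) l₂ y⟩

theorem SlotLin.append_right {φ : List M → N} (h : SlotLin k φ) (l : List M) :
    SlotLin k (fun l' => φ (l' ++ l)) :=
  ⟨fun l₁ l₂ y z => by simpa using h.add l₁ (l₂ ++ l) y z,
   fun a l₁ l₂ y => by simpa using h.smul a l₁ (l₂ ++ l) y⟩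

theorem SlotLin.sub {φ ψ : List M → N} (h : SlotLin k φ) (h' : SlotLin k ψ) :
    SlotLin k (fun l => φ l - ψ l) :=
  ⟨fun l₁ l₂ y z => by simp only [h.add, h'.add]; abel,
   fun a l₁ l₂ y => by simp only [h.smul, h'.smul, smul_sub]⟩

theorem SlotLin.add' {φ ψ : List M → N} (h : SlotLin k φ) (h' : SlotLin k ψ) :
    SlotLin k (fun l => φ l + ψ l) :=
  ⟨fun l₁ l₂ y z => by simp only [h.add, h'.add]; abel,
   fun a l₁ l₂ y => by simp only [h.smul, h'.smul, smul_add]⟩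

theorem SlotLin.smul' {φ : List M → N} (h : SlotLin k φ) (a : k) :
    SlotLin k (fun l => a • φ l) :=
  ⟨fun l₁ l₂ y z => by simp only [h.add, smul_add],
   fun b l₁ l₂ y => by simp only [h.smul, smul_comm a b]⟩

theorem SlotLin.comp {φ : List M → N} (h : SlotLin k φ) (g : N →ₗ[k] N') :
    SlotLin k (fun l => g (φ l)) :=
  ⟨fun l₁ l₂ y z => by simp only [h.add, map_add],
   fun a l₁ l₂ y => by simp only [h.smul, map_smul]⟩

theorem SlotLin.map {φ : List M → N} (h : SlotLin k φ) (g : N' →ₗ[k] M) :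
    SlotLin k (fun l => φ (l.map g)) :=
  ⟨fun l₁ l₂ y z => by
      simp only [List.map_append, List.map_cons, map_add, h.add],
   fun a l₁ l₂ y => by
      simp only [List.map_append, List.map_cons, map_smul, h.smul]⟩

theorem SlotLin.mem_of_span {φ : List M → N} (h : SlotLin k φ) {S : Set M}
    (hS : Submodule.span k S = ⊤) (W : Submodule k N)
    (hW : ∀ l : List M, (∀ x ∈ l, x ∈ S) → φ l ∈ W) (l : List M) : φ l ∈ W := by
  suffices H : ∀ l₂ l₁ : List M, (∀ x ∈ l₁, x ∈ S) → φ (l₁ ++ l₂) ∈ W from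
    H l [] (by simp)
  intro l₂
  induction l₂ with
  | nil => intro l₁ h₁; simpa using hW l₁ h₁
  | cons x l₂ ih =>
    intro l₁ h₁
    have hx : x ∈ Submodule.span k S := by rw [hS]; trivial
    have h0 : φ (l₁ ++ (0 : M) :: l₂) = 0 := by
      simpa using h.smul 0 l₁ l₂ 0
    induction hx using Submodule.span_induction with
    | mem x hx =>
      have := ih (l₁ ++ [x]) (by
        intro z hz
        rcases List.mem_append.1 hz with hz | hz
        · exact h₁ z hz
        · rw [List.mem_singleton.1 hz]; exact hx)
      simpa using this
    | zero => rw [h0]; exact W.zero_mem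
    | add x y _ _ hx hy => rw [h.add]; exact W.add_mem hx hy
    | smul a x _ hx => rw [h.smul]; exact W.smul_mem a hx

/-- Multilinear functions agreeing on a spanning set are equal. -/
theorem SlotLin.ext_of_span {φ ψ : List M → N} (h : SlotLin k φ) (h' : SlotLin k ψ)
    {S : Set M} (hS : Submodule.span k S = ⊤)
    (hW : ∀ l : List M, (∀ x ∈ l, x ∈ S) → φ l = ψ l) (l : List M) : φ l = ψ l := by
  have := (h.sub h').mem_of_span hS ⊥
    (fun l hl => by simp [hW l hl]) l
  exact sub_eq_zero.1 (by simpa using this)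

/-- The one-slot linear map obtained by freezing all the other entries. -/
def SlotLin.slot {φ : List M → N} (h : SlotLin k φ) (l₁ l₂ : List M) : M →ₗ[k] N where
  toFun x := φ (l₁ ++ x :: l₂)
  map_add' := h.add l₁ l₂
  map_smul' a x := h.smul a l₁ l₂ x

theorem SlotLin.permInv {φ : List M → N} (h : SlotLin k φ) {S : Set M}
    (hS : Submodule.span k S = ⊤)
    (hW : ∀ l₁ l₂ x y, (∀ z ∈ l₁ ++ x :: y :: l₂, z ∈ S) →
      φ (l₁ ++ x :: y :: l₂) = φ (l₁ ++ y :: x :: l₂)) : PermInv φ := by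
  have key : ∀ l₁ l₂ x y, φ (l₁ ++ x :: y :: l₂) = φ (l₁ ++ y :: x :: l₂) := by
    intro l₁ l₂ x y
    refine (h.append_right (x :: y :: l₂)).ext_of_span (h.append_right (y :: x :: l₂)) hS
      (fun l₁ hl₁ => ?_) l₁
    have h₂ := (h.append_left l₁)
    refine ((h₂.cons x).cons y).ext_of_span ((h₂.cons y).cons x) hS
      (fun l₂ hl₂ => ?_) l₂
    have e₁ : ∀ x ∈ S, h.slot l₁ (x :: l₂) = h.slot (l₁ ++ [x]) l₂ := by
      intro x hx
      refine LinearMap.ext_on hS fun y hy => ?_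
      have := hW l₁ l₂ x y (by
        intro z hz
        simp only [List.mem_append, List.mem_cons] at hz
        rcases hz with hz | rfl | rfl | hz
        exacts [hl₁ z hz, hx, hy, hl₂ z hz])
      simpa [SlotLin.slot] using this.symm
    have e₂ : h.slot (l₁ ++ [y]) l₂ = h.slot l₁ (y :: l₂) := by
      refine LinearMap.ext_on hS fun x hx => ?_
      simpa [SlotLin.slot] using LinearMap.congr_fun (e₁ x hx) y
    simpa [SlotLin.slot] using (LinearMap.congr_fun e₂ x).symm
  intro l l' hl
  suffices H : ∀ l₁, φ (l₁ ++ l) = φ (l₁ ++ l') from H []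
  induction hl with
  | nil => intro _; rfl
  | cons x _ ih => intro l₁; simpa using ih (l₁ ++ [x])
  | trans _ _ ih₁ ih₂ => intro l₁; exact (ih₁ l₁).trans (ih₂ l₁)
  | swap x y l => intro l₁; exact key _ _ _ _

end

section
variable {M N N' : Type} [AddCommGroup N] [AddCommGroup N']

theorem derivL_add (δ : M → M) (φ ψ : List M → N) (l : List M) :
    derivL δ (fun l => φ l + ψ l) l = derivL δ φ l + derivL δ ψ l := by
  induction l generalizing φ ψ with
  | nil => simp [derivL]
  | cons x l ih => simp only [derivL, ih]; abel

theorem derivL_comp (δ : M → M) (g : N →+ N') (φ : List M → N) (l : List M) :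
    g (derivL δ φ l) = derivL δ (fun l => g (φ l)) l := by
  induction l generalizing φ with
  | nil => simp [derivL]
  | cons x l ih => simp only [derivL, map_add, ih]

theorem derivL_sub (δ : M → M) (φ ψ : List M → N) (l : List M) :
    derivL δ (fun l => φ l - ψ l) l = derivL δ φ l - derivL δ ψ l := by
  induction l generalizing φ ψ with
  | nil => simp [derivL]
  | cons x l ih => simp only [derivL, ih]; abel

theorem derivL_zero (δ : M → M) (l : List M) :
    derivL δ (fun _ => (0 : N)) l = 0 := by
  induction l with
  | nil => rfl
  | cons x l ih => simp only [derivL, ih, add_zero]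

theorem derivL_append (δ : M → M) (φ : List M → N) (l₁ l₂ : List M) :
    derivL δ φ (l₁ ++ l₂)
      = derivL δ (fun l => φ (l ++ l₂)) l₁ + derivL δ (fun l => φ (l₁ ++ l)) l₂ := by
  induction l₁ generalizing φ with
  | nil => simp [derivL]
  | cons x l ih => simp only [List.cons_append, derivL, ih, add_assoc]

theorem derivL_congr_left {δ δ' : M → M} (φ : List M → N) {l : List M}
    (h : ∀ x ∈ l, δ x = δ' x) : derivL δ φ l = derivL δ' φ l := by
  induction l generalizing φ with
  | nil => rfl
  | cons x l ih =>
    simp only [derivL]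
    rw [h x (by simp), ih _ (fun y hy => h y (by simp [hy]))]

theorem derivL_congr_right (δ : M → M) {φ ψ : List M → N} {l : List M}
    (h : ∀ l' : List M, l'.length = l.length → φ l' = ψ l') :
    derivL δ φ l = derivL δ ψ l := by
  induction l generalizing φ ψ with
  | nil => rfl
  | cons x l ih =>
    simp only [derivL]
    rw [h _ (by simp), ih (fun l' hl' => h _ (by simp [hl']))]

/-- The commutator of two derivations is the derivation of the commutator, written
without subtraction. -/
theorem derivL_comm (δ ε : M → M) (φ : List M → N) (l : List M) :
    derivL δ (derivL ε φ) l + derivL (fun x => δ (ε x)) φ l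
      = derivL ε (derivL δ φ) l + derivL (fun x => ε (δ x)) φ l := by
  induction l generalizing φ with
  | nil => simp [derivL]
  | cons x l ih =>
    have := ih (fun l' => φ (x :: l'))
    simp only [derivL, derivL_add]
    rw [← sub_eq_zero] at this ⊢
    rw [← this]
    abel

theorem PermInv.derivL {φ : List M → N} (h : PermInv φ) (δ : M → M) :
    PermInv (derivL δ φ) := by
  intro l l' hl
  induction hl generalizing φ with
  | nil => rfl
  | cons x hl ih =>
    simp only [FreePreLie.derivL]
    rw [h _ _ (hl.cons _), ih (h.cons x)]
  | swap x y l =>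
    simp only [FreePreLie.derivL]
    have : (fun l' => φ (x :: y :: l')) = fun l' => φ (y :: x :: l') :=
      funext fun l' => h _ _ (List.Perm.swap _ _ _)
    rw [this, h _ _ (List.Perm.swap x (δ y) l), h _ _ (List.Perm.swap (δ x) y l)]
    abel
  | trans _ _ ih₁ ih₂ => exact (ih₁ h).trans (ih₂ h)

theorem derivL_map {M' : Type} {δ : M → M} {δ' : M' → M'} (g : M → M')
    (φ : List M' → N) {l : List M} (h : ∀ x ∈ l, g (δ x) = δ' (g x)) :
    derivL δ (fun l => φ (l.map g)) l = derivL δ' φ (l.map g) := by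
  induction l generalizing φ with
  | nil => rfl
  | cons x l ih =>
    simp only [derivL, List.map_cons]
    rw [h x (by simp), ih (fun l => φ (g x :: l)) (fun y hy => h y (by simp [hy]))]

theorem derivL_mem {δ : M → M} {φ : List M → N} {A : Set M} (W : AddSubgroup N)
    {l : List M} (hl : ∀ x ∈ l, x ∈ A ∧ δ x ∈ A)
    (h : ∀ l' : List M, l'.length = l.length → (∀ x ∈ l', x ∈ A) → φ l' ∈ W) :
    derivL δ φ l ∈ W := by
  induction l generalizing φ with
  | nil => exact W.zero_mem
  | cons x l ih =>
    refine W.add_mem (h _ (by simp) ?_) (ih (fun y hy => hl y (by simp [hy])) ?_)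
    · intro z hz
      rcases List.mem_cons.1 hz with rfl | hz
      · exact (hl x (by simp)).2
      · exact (hl z (by simp [hz])).1
    · intro l' hl' hA
      refine h _ (by simp [hl']) ?_
      intro z hz
      rcases List.mem_cons.1 hz with rfl | hz
      · exact (hl z (by simp)).1
      · exact hA z hz

end

section
variable {k : Type} [Field k] {M N : Type} [AddCommGroup M] [Module k M]
  [AddCommGroup N] [Module k N]

theorem SlotLin.derivL_fun_add {φ : List M → N} (h : SlotLin k φ) (δ ε : M → M)
    (l : List M) :
    derivL (fun x => δ x + ε x) φ l = derivL δ φ l + derivL ε φ l := by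
  induction l generalizing φ with
  | nil => simp [derivL]
  | cons x l ih =>
    have := h.add [] l (δ x) (ε x)
    simp only [List.nil_append] at this
    simp only [derivL, ih (h.cons x), this]; abel

theorem SlotLin.derivL_fun_smul {φ : List M → N} (h : SlotLin k φ) (a : k) (δ : M → M)
    (l : List M) :
    derivL (fun x => a • δ x) φ l = a • derivL δ φ l := by
  induction l generalizing φ with
  | nil => simp [derivL]
  | cons x l ih =>
    have := h.smul a [] l (δ x)
    simp only [List.nil_append] at this
    simp only [derivL, ih (h.cons x), this, smul_add]

theorem SlotLin.derivL {φ : List M → N} (h : SlotLin k φ) (δ : M →ₗ[k] M) :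
    SlotLin k (derivL δ φ) := by
  constructor
  · intro l₁ l₂ x y
    simp only [derivL_append, FreePreLie.derivL, derivL_add, map_add, h.add]
    abel
  · intro a l₁ l₂ x
    have hs : ∀ (ψ : List M → N) l, FreePreLie.derivL δ (fun l => a • ψ l) l
        = a • FreePreLie.derivL δ ψ l := fun ψ l =>
      (derivL_comp δ (DistribSMul.toAddMonoidHom N a) ψ l).symm
    simp only [derivL_append, FreePreLie.derivL, hs, map_smul, h.smul, smul_add]

end

/-! ### The multilinear node operation on `Tr(V)` -/

theorem PTree.ind {V : Type} {p : PTree V → Prop}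
    (h : ∀ v ts, (∀ t ∈ ts, p t) → p (.node v ts)) (t : PTree V) : p t :=
  PTree.rec (motive_1 := p) (motive_2 := fun ts => ∀ t ∈ ts, p t) h
    (by simp) (fun t ts ht hts => by simpa using ⟨ht, hts⟩) t

mutual
  /-- Evaluation of a planar tree when every vertex decorated by `v` acts as the
  operation `B v` on the list of values of its children. -/
  def foldT {V Q : Type} (B : V → List Q → Q) : PTree V → Q
    | .node v ts => B v (foldTL B ts)
  /-- The values of the trees in a list; equal to `ts.map (foldT B)`. -/
  def foldTL {V Q : Type} (B : V → List Q → Q) : List (PTree V) → List Q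
    | [] => []
    | t :: ts => foldT B t :: foldTL B ts
end

theorem foldTL_eq {V Q : Type} (B : V → List Q → Q) (ts : List (PTree V)) :
    foldTL B ts = ts.map (foldT B) := by
  induction ts with
  | nil => simp [foldTL]
  | cons t ts ih => simp [foldTL, ih]

theorem foldT_node {V Q : Type} (B : V → List Q → Q) (v : V) (ts : List (PTree V)) :
    foldT B (.node v ts) = B v (ts.map (foldT B)) := by
  rw [foldT, foldTL_eq]

section
variable (k : Type) {V : Type} [Field k] [AddCommGroup V] [Module k V]

/-- The class in `Tr(V)` of a planar tree. -/
noncomputable def cls (t : PTree V) : TrSpace k V :=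
  Submodule.Quotient.mk (Finsupp.single t 1)

/-- Auxiliary form of the node operation: the first children are the planar trees
`ts`, the remaining ones are elements of `Tr(V)`, expanded through arbitrary
representatives. -/
noncomputable def nodeAux (v : V) : List (TrSpace k V) → List (PTree V) → TrSpace k V
  | [], ts => cls k (.node v ts)
  | x :: l, ts =>
      Finsupp.linearCombination k (fun t => nodeAux v l (ts ++ [t])) (Quotient.out x)

theorem span_cls : Submodule.span k (Set.range (cls k (V := V))) = ⊤ := by
  rw [eq_top_iff]
  rintro x -
  obtain ⟨x, rfl⟩ := Submodule.Quotient.mk_surjective _ x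
  induction x using Finsupp.induction_linear with
  | zero => exact Submodule.zero_mem _
  | add x y hx hy => exact Submodule.add_mem _ hx hy
  | single t a =>
    have : (Submodule.Quotient.mk (Finsupp.single t a) : TrSpace k V) = a • cls k t := by
      rw [cls, ← Submodule.Quotient.mk_smul]; simp
    rw [this]
    exact Submodule.smul_mem _ _ (Submodule.subset_span ⟨t, rfl⟩)

theorem mk_eq_of_rel {x y : PTree V →₀ k} (h : TreeRel k V x y) :
    (Submodule.Quotient.mk x : TrSpace k V) = Submodule.Quotient.mk y :=
  (Submodule.Quotient.eq _).2 (Submodule.subset_span ⟨x, y, h, rfl⟩)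

theorem lc_cls_node (v : V) (l₁ l₂ : List (PTree V)) (x : PTree V →₀ k) :
    Finsupp.linearCombination k (fun t => cls k (PTree.node v (l₁ ++ t :: l₂))) x
      = Submodule.Quotient.mk (Finsupp.mapDomain (fun t => PTree.node v (l₁ ++ t :: l₂)) x) := by
  induction x using Finsupp.induction_linear with
  | zero => simp
  | add x y hx hy =>
    rw [map_add, hx, hy, Finsupp.mapDomain_add, Submodule.Quotient.mk_add]
  | single t a =>
    rw [Finsupp.linearCombination_single, Finsupp.mapDomain_single, cls,
      ← Submodule.Quotient.mk_smul]
    simp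

/-- The node operation respects the relations in each of its planar slots. -/
theorem lc_nodeAux_rel (v : V) (l : List (TrSpace k V)) (l₁ l₂ : List (PTree V))
    {x : PTree V →₀ k} (hx : x ∈ treeRelSub k V) :
    Finsupp.linearCombination k (fun t => nodeAux k v l (l₁ ++ t :: l₂)) x = 0 := by
  induction l generalizing l₂ with
  | nil =>
    simp only [nodeAux]
    induction hx using Submodule.span_induction with
    | mem z hz =>
      obtain ⟨x, y, h, rfl⟩ := hz
      rw [map_sub, lc_cls_node, lc_cls_node, mk_eq_of_rel k (TreeRel.congr x y v l₁ l₂ h),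
        sub_self]
    | zero => simp
    | add x y _ _ hx hy => rw [map_add, hx, hy, add_zero]
    | smul a x _ hx => rw [map_smul, hx, smul_zero]
  | cons y l ih =>
    simp only [nodeAux]
    generalize Quotient.out y = w
    induction w using Finsupp.induction_linear with
    | zero => simp [Finsupp.linearCombination_apply]
    | add w w' hw hw' =>
      have : (fun t => Finsupp.linearCombination k
            (fun t' => nodeAux k v l (l₁ ++ t :: l₂ ++ [t'])) (w + w'))
          = (fun t => Finsupp.linearCombination k
            (fun t' => nodeAux k v l (l₁ ++ t :: l₂ ++ [t'])) w)
          + (fun t => Finsupp.linearCombination k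
            (fun t' => nodeAux k v l (l₁ ++ t :: l₂ ++ [t'])) w') := by
        funext t; simp
      rw [this, Finsupp.linearCombination_apply] at *
      simp only [Finsupp.linearCombination_apply] at hw hw'
      simp only [Pi.add_apply, smul_add, Finsupp.sum_add, Finsupp.linearCombination_apply]
      rw [hw, hw', add_zero]
    | single t a =>
      have := ih (l₂ ++ [t])
      simp only [Finsupp.linearCombination_single]
      rw [Finsupp.linearCombination_apply] at this ⊢
      simp only [List.append_assoc, List.cons_append, smul_comm _ a]
      rw [← Finsupp.smul_sum, this, smul_zero]

theorem nodeAux_cons (v : V) (x : PTree V →₀ k) (l : List (TrSpace k V))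
    (ts : List (PTree V)) :
    nodeAux k v ((Submodule.Quotient.mk x : TrSpace k V) :: l) ts
      = Finsupp.linearCombination k (fun t => nodeAux k v l (ts ++ [t])) x := by
  rw [nodeAux, ← sub_eq_zero, ← map_sub]
  refine lc_nodeAux_rel k v l ts [] ?_
  rw [← Submodule.Quotient.eq]
  exact Quotient.out_eq _

/-- The node operation: `nodeT v [x₁, …, xₙ]` is the tree with root decorated by `v`
and branches `x₁, …, xₙ`, extended multilinearly to elements of `Tr(V)`. -/
noncomputable def nodeT (v : V) (l : List (TrSpace k V)) : TrSpace k V := nodeAux k v l []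

theorem nodeAux_map_cls (v : V) (ts' ts : List (PTree V)) :
    nodeAux k v (ts'.map (cls k)) ts = cls k (.node v (ts ++ ts')) := by
  induction ts' generalizing ts with
  | nil => simp [nodeAux]
  | cons t ts' ih =>
    rw [List.map_cons, cls, nodeAux_cons, Finsupp.linearCombination_single, ih]
    simp

theorem nodeT_map_cls (v : V) (ts : List (PTree V)) :
    nodeT k v (ts.map (cls k)) = cls k (.node v ts) := by
  rw [nodeT, nodeAux_map_cls, List.nil_append]

theorem slotLin_nodeAux (v : V) (ts : List (PTree V)) :
    SlotLin k (fun l => nodeAux k v l ts) := by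
  constructor
  · intro l₁ l₂ x y
    induction l₁ generalizing ts with
    | nil =>
      obtain ⟨x, rfl⟩ := Submodule.Quotient.mk_surjective _ x
      obtain ⟨y, rfl⟩ := Submodule.Quotient.mk_surjective _ y
      simp only [List.nil_append]
      rw [← Submodule.Quotient.mk_add]
      simp only [nodeAux_cons, map_add]
    | cons z l₁ ih =>
      obtain ⟨z, rfl⟩ := Submodule.Quotient.mk_surjective _ z
      simp only [List.cons_append, nodeAux_cons, ih]
      simp only [Finsupp.linearCombination_apply, smul_add, Finsupp.sum_add]
  · intro a l₁ l₂ x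
    induction l₁ generalizing ts with
    | nil =>
      obtain ⟨x, rfl⟩ := Submodule.Quotient.mk_surjective _ x
      simp only [List.nil_append]
      rw [← Submodule.Quotient.mk_smul]
      simp only [nodeAux_cons, map_smul]
    | cons z l₁ ih =>
      obtain ⟨z, rfl⟩ := Submodule.Quotient.mk_surjective _ z
      simp only [List.cons_append, nodeAux_cons, ih]
      simp only [Finsupp.linearCombination_apply, smul_comm _ a, ← Finsupp.smul_sum]

theorem slotLin_nodeT (v : V) : SlotLin k (nodeT k v) := slotLin_nodeAux k v []

theorem exists_map_cls {l : List (TrSpace k V)} (hl : ∀ x ∈ l, x ∈ Set.range (cls k (V := V))) :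
    ∃ ts : List (PTree V), l = ts.map (cls k) := by
  induction l with
  | nil => exact ⟨[], rfl⟩
  | cons x l ih =>
    obtain ⟨t, rfl⟩ := hl x (by simp)
    obtain ⟨ts, rfl⟩ := ih fun y hy => hl y (by simp [hy])
    exact ⟨t :: ts, rfl⟩

theorem nodeT_add (v w : V) (l : List (TrSpace k V)) :
    nodeT k (v + w) l = nodeT k v l + nodeT k w l := by
  refine (slotLin_nodeT k (v + w)).ext_of_span
    ((slotLin_nodeT k v).add' (slotLin_nodeT k w)) (span_cls k) (fun l hl => ?_) l
  obtain ⟨ts, rfl⟩ := exists_map_cls k hl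
  rw [nodeT_map_cls, nodeT_map_cls, nodeT_map_cls]
  exact mk_eq_of_rel k (TreeRel.add_label v w ts)

theorem nodeT_smul (a : k) (v : V) (l : List (TrSpace k V)) :
    nodeT k (a • v) l = a • nodeT k v l := by
  refine (slotLin_nodeT k (a • v)).ext_of_span
    ((slotLin_nodeT k v).smul' a) (span_cls k) (fun l hl => ?_) l
  obtain ⟨ts, rfl⟩ := exists_map_cls k hl
  rw [nodeT_map_cls, nodeT_map_cls]
  exact mk_eq_of_rel k (TreeRel.smul_label a v ts)

theorem permInv_nodeT (v : V) : PermInv (nodeT k v) := by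
  refine (slotLin_nodeT k v).permInv (span_cls k) fun l₁ l₂ x y hl => ?_
  simp only [List.mem_append, List.mem_cons] at hl
  obtain ⟨ts₁, rfl⟩ := exists_map_cls k (l := l₁) (fun z hz => hl z (.inl hz))
  obtain ⟨ts₂, rfl⟩ := exists_map_cls k (l := l₂) (fun z hz => hl z (.inr (.inr (.inr hz))))
  obtain ⟨t, rfl⟩ := hl x (.inr (.inl rfl))
  obtain ⟨t', rfl⟩ := hl y (.inr (.inr (.inl rfl)))
  have h := nodeT_map_cls k v (ts₁ ++ t :: t' :: ts₂)
  have h' := nodeT_map_cls k v (ts₁ ++ t' :: t :: ts₂)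
  simp only [List.map_append, List.map_cons] at h h'
  rw [h, h']
  exact mk_eq_of_rel k (TreeRel.swap v ts₁ ts₂ t t')

/-- A subspace of `Tr(V)` stable under all node operations is everything. -/
theorem nodeT_induction (E : Submodule k (TrSpace k V))
    (hE : ∀ v l, (∀ x ∈ l, x ∈ E) → nodeT k v l ∈ E) (x : TrSpace k V) : x ∈ E := by
  have h : Submodule.span k (Set.range (cls k (V := V))) ≤ E := by
    rw [Submodule.span_le]
    rintro _ ⟨t, rfl⟩
    induction t using PTree.ind with
    | h v ts ih =>
      rw [← nodeT_map_cls]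
      refine hE v _ fun x hx => ?_
      obtain ⟨t, ht, rfl⟩ := List.mem_map.1 hx
      exact ih t ht
  rw [span_cls] at h
  exact h trivial

/-- Recursion principle for `Tr(V)`: for symmetric multilinear operations `B v` on `Q`,
linear in `v`, some linear map `Tr(V) → Q` turns the node operations into the `B v`. -/
theorem exists_fold {Q : Type} [AddCommGroup Q] [Module k Q] (B : V → List Q → Q)
    (hB : ∀ v, SlotLin k (B v)) (hs : ∀ v, PermInv (B v))
    (hadd : ∀ v w l, B (v + w) l = B v l + B w l)
    (hsmul : ∀ (a : k) v l, B (a • v) l = a • B v l) :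
    ∃ g : TrSpace k V →ₗ[k] Q, ∀ v l, g (nodeT k v l) = B v (l.map g) := by
  let g₀ : (PTree V →₀ k) →ₗ[k] Q := Finsupp.linearCombination k (foldT B)
  have hg₀ : ∀ t, g₀ (Finsupp.single t 1) = foldT B t := fun t => by simp [g₀]
  have hplug : ∀ v l₁ l₂ x, g₀ (Finsupp.mapDomain (fun t => PTree.node v (l₁ ++ t :: l₂)) x)
      = (hB v).slot (l₁.map (foldT B)) (l₂.map (foldT B)) (g₀ x) := by
    intro v l₁ l₂ x
    induction x using Finsupp.induction_linear with
    | zero => simp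
    | add x y hx hy => rw [Finsupp.mapDomain_add, map_add, map_add, map_add, hx, hy]
    | single t a =>
      rw [Finsupp.mapDomain_single]
      simp only [g₀, Finsupp.linearCombination_single, map_smul, foldT_node,
        List.map_append, List.map_cons]
      rfl
  have hrel : ∀ x y, TreeRel k V x y → g₀ x = g₀ y := by
    intro x y h
    induction h with
    | swap v l₁ l₂ t t' =>
      rw [hg₀, hg₀, foldT_node, foldT_node]
      exact hs v _ _ (((List.Perm.swap t' t l₂).append_left l₁).map _)
    | smul_label a v ts => rw [map_smul, hg₀, hg₀, foldT_node, foldT_node, hsmul]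
    | add_label v w ts => rw [map_add, hg₀, hg₀, hg₀, foldT_node, foldT_node, foldT_node, hadd]
    | congr x y v l₁ l₂ _ ih => rw [hplug, hplug, ih]
  have hle : treeRelSub k V ≤ LinearMap.ker g₀ := by
    refine Submodule.span_le.2 ?_
    rintro _ ⟨x, y, h, rfl⟩
    simp [hrel x y h]
  refine ⟨(treeRelSub k V).liftQ g₀ hle, fun v l => ?_⟩
  have hcls : ∀ t, (treeRelSub k V).liftQ g₀ hle (cls k t) = foldT B t := fun t => by
    rw [cls, Submodule.liftQ_apply, hg₀]
  refine ((slotLin_nodeT k v).comp _).ext_of_span ((hB v).map _) (span_cls k)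
    (fun l hl => ?_) l
  obtain ⟨ts, rfl⟩ := exists_map_cls k hl
  rw [nodeT_map_cls, hcls, foldT_node, List.map_map]
  exact congrArg _ (List.map_congr_left fun t _ => (hcls t).symm)

end

/-! ### Grafting as a pre-Lie product on `Tr(V)` -/

section
variable (k : Type) {V : Type} [Field k] [AddCommGroup V] [Module k V]

/-- Right multiplication by `y` exists: the pair `(x, x ⋆ y)` obeys a recursion of the
form required by `exists_fold`, on `Tr(V) × Tr(V)`. -/
theorem exists_graft (y : TrSpace k V) :
    ∃ ρ : TrSpace k V →ₗ[k] TrSpace k V, ∀ v l,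
      ρ (nodeT k v l) = nodeT k v (y :: l) + derivL ρ (nodeT k v) l := by
  let T := TrSpace k V
  let p : T × T →ₗ[k] T := LinearMap.fst k T T
  -- the square-zero derivation `(x, x') ↦ (x', 0)`
  let δ : T × T →ₗ[k] T × T := (LinearMap.inl k T T).comp (LinearMap.snd k T T)
  let φ : V → List (T × T) → T := fun v l => nodeT k v (l.map p)
  have hφ : ∀ v, SlotLin k (φ v) := fun v => (slotLin_nodeT k v).map p
  have hφs : ∀ v, PermInv (φ v) := fun v l l' h => permInv_nodeT k v _ _ (h.map _)
  let ψ : V → List (T × T) → T := fun v l => nodeT k v (y :: l.map p) + derivL δ (φ v) l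
  have hψ : ∀ v, SlotLin k (ψ v) := fun v =>
    (((slotLin_nodeT k v).cons y).map p).add' ((hφ v).derivL δ)
  have hψs : ∀ v, PermInv (ψ v) := fun v l l' h => by
    have h₁ := permInv_nodeT k v _ _ ((h.map p).cons y)
    have h₂ := (hφs v).derivL δ _ _ h
    simp only [ψ, h₁, h₂]
  obtain ⟨g, hg⟩ := exists_fold k (fun v l => (φ v l, ψ v l))
    (fun v => ⟨fun l₁ l₂ x y => Prod.ext ((hφ v).add _ _ _ _) ((hψ v).add _ _ _ _),
      fun a l₁ l₂ x => Prod.ext ((hφ v).smul _ _ _ _) ((hψ v).smul _ _ _ _)⟩)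
    (fun v l l' h => Prod.ext (hφs v _ _ h) (hψs v _ _ h))
    (fun v w l => by
      have : φ (v + w) = fun l => φ v l + φ w l := funext fun l => nodeT_add k v w _
      simp only [ψ, this, derivL_add, nodeT_add, Prod.mk_add_mk, Prod.mk.injEq, true_and]
      abel)
    (fun a v l => by
      have h₁ : φ (a • v) = fun l => a • φ v l := funext fun l => nodeT_smul k a v _
      have h₂ := derivL_comp δ (DistribSMul.toAddMonoidHom T a) (φ v) l
      simp only [DistribSMul.toAddMonoidHom_apply] at h₂
      simp only [ψ, h₁, nodeT_smul, Prod.smul_mk, smul_add, h₂])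
  have h₁ : ∀ x, p (g x) = x := by
    refine nodeT_induction k (LinearMap.eqLocus (p.comp g) LinearMap.id) fun v l hl => ?_
    change p (g (nodeT k v l)) = nodeT k v l
    rw [hg]
    change nodeT k v ((l.map g).map p) = _
    rw [List.map_map]
    congr 1
    exact (List.map_congr_left hl).trans (List.map_id l)
  have hmap : ∀ l : List T, (l.map g).map p = l := fun l => by
    rw [List.map_map]
    exact (List.map_congr_left fun x _ => h₁ x).trans (List.map_id l)
  refine ⟨(LinearMap.snd k T T).comp g, fun v l => ?_⟩
  have h₂ : ∀ (χ : List T → T) (l : List T), derivL δ (fun l => χ (l.map p)) (l.map g)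
      = derivL ((LinearMap.snd k T T).comp g) χ l := by
    intro χ l
    induction l generalizing χ with
    | nil => rfl
    | cons x l ih =>
      simp only [derivL, List.map_cons, hmap]
      rw [← ih (fun l => χ (x :: l)), h₁]
      rfl
  rw [LinearMap.comp_apply, hg]
  change nodeT k v (y :: (l.map g).map p) + derivL δ (φ v) (l.map g) = _
  rw [hmap, h₂]

/-- Right multiplication by `y` for the grafting product. -/
noncomputable def graftR (y : TrSpace k V) : TrSpace k V →ₗ[k] TrSpace k V :=
  (exists_graft k y).choose

theorem graftR_nodeT (y : TrSpace k V) (v : V) (l : List (TrSpace k V)) :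
    graftR k y (nodeT k v l) = nodeT k v (y :: l) + derivL (graftR k y) (nodeT k v) l :=
  (exists_graft k y).choose_spec v l

theorem graftR_add (y z : TrSpace k V) : graftR k (y + z) = graftR k y + graftR k z := by
  refine LinearMap.ext fun x => nodeT_induction k (LinearMap.eqLocus _ _) (fun v l hl => ?_) x
  change graftR k (y + z) (nodeT k v l) = graftR k y (nodeT k v l) + graftR k z (nodeT k v l)
  have h₁ := (slotLin_nodeT k v).add [] l y z
  have h₂ := (slotLin_nodeT k v).derivL_fun_add (graftR k y) (graftR k z) l
  simp only [List.nil_append] at h₁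
  rw [graftR_nodeT, graftR_nodeT, graftR_nodeT, h₁,
    derivL_congr_left (δ' := fun x => graftR k y x + graftR k z x) _ hl, h₂]
  abel

theorem graftR_smul (a : k) (y : TrSpace k V) : graftR k (a • y) = a • graftR k y := by
  refine LinearMap.ext fun x => nodeT_induction k (LinearMap.eqLocus _ _) (fun v l hl => ?_) x
  change graftR k (a • y) (nodeT k v l) = a • graftR k y (nodeT k v l)
  have h₁ := (slotLin_nodeT k v).smul a [] l y
  have h₂ := (slotLin_nodeT k v).derivL_fun_smul a (graftR k y) l
  simp only [List.nil_append] at h₁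
  rw [graftR_nodeT, graftR_nodeT, h₁,
    derivL_congr_left (δ' := fun x => a • graftR k y x) _ hl, h₂, smul_add]

/-- The grafting product `x ⋆ y` on `Tr(V)`. -/
noncomputable def mulT : TrSpace k V →ₗ[k] TrSpace k V →ₗ[k] TrSpace k V :=
  LinearMap.mk₂ k (fun x y => graftR k y x) (fun x x' y => map_add _ x x')
    (fun a x y => map_smul _ a x) (fun x y y' => by rw [graftR_add]; rfl)
    (fun a x y => by rw [graftR_smul]; rfl)

theorem mulT_apply (x y : TrSpace k V) : mulT k x y = graftR k y x := rfl

/-- The difference `(x ⋆ y) ⋆ z - x ⋆ (y ⋆ z)` sums over the ways of attaching `y` and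
`z` to two independently chosen vertices of `x`, hence is symmetric in `y` and `z`. -/
theorem mulT_preLie (x y z : TrSpace k V) :
    mulT k (mulT k x y) z - mulT k x (mulT k y z)
      = mulT k (mulT k x z) y - mulT k x (mulT k z y) := by
  simp only [mulT_apply]
  refine nodeT_induction k (LinearMap.eqLocus
    ((graftR k z).comp (graftR k y) - graftR k (graftR k z y))
    ((graftR k y).comp (graftR k z) - graftR k (graftR k y z))) (fun v l hl => ?_) x
  change graftR k z (graftR k y (nodeT k v l)) - graftR k (graftR k z y) (nodeT k v l)
    = graftR k y (graftR k z (nodeT k v l)) - graftR k (graftR k y z) (nodeT k v l)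
  have comp : ∀ y z : TrSpace k V, graftR k z (graftR k y (nodeT k v l))
      = nodeT k v (z :: y :: l) + nodeT k v (graftR k z y :: l)
        + derivL (graftR k z) (fun l => nodeT k v (y :: l)) l
        + derivL (graftR k y) (fun l => nodeT k v (z :: l)) l
        + derivL (graftR k y) (derivL (graftR k z) (nodeT k v)) l := by
    intro y z
    have h := derivL_comp (graftR k y) (graftR k z).toAddMonoidHom (nodeT k v) l
    simp only [LinearMap.toAddMonoidHom_coe, graftR_nodeT, derivL_add] at h
    rw [graftR_nodeT, map_add, graftR_nodeT, h]
    simp only [derivL]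
    abel
  have hsym := permInv_nodeT k v _ _ (List.Perm.swap y z l)
  have hcomm := derivL_comm (graftR k y) (graftR k z) (nodeT k v) l
  have hδ := derivL_congr_left (nodeT k v) (l := l)
    (δ := fun x => graftR k z (graftR k y x) + graftR k (graftR k y z) x)
    (δ' := fun x => graftR k y (graftR k z x) + graftR k (graftR k z y) x) (by
      intro x hx
      have := hl x hx
      change graftR k z (graftR k y x) - graftR k (graftR k z y) x
        = graftR k y (graftR k z x) - graftR k (graftR k y z) x at this
      rw [sub_eq_sub_iff_add_eq_add] at this
      exact this)
  rw [(slotLin_nodeT k v).derivL_fun_add (fun x => graftR k z (graftR k y x)),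
    (slotLin_nodeT k v).derivL_fun_add (fun x => graftR k y (graftR k z x))] at hδ
  rw [comp y z, comp z y, graftR_nodeT, graftR_nodeT, hsym]
  rw [← sub_eq_zero] at hcomm hδ ⊢
  rw [← add_zero (0 : TrSpace k V)]
  nth_rewrite 1 [← hcomm]
  rw [← hδ]
  abel

/-- `mulT` is computed on planar trees by the formal grafting sum. -/
theorem graftR_cls (s t : PTree V) :
    graftR k (cls k s) (cls k t) = Submodule.Quotient.mk (graftF k s t) := by
  induction t using PTree.ind with
  | h v ts ih =>
    have hplug : ∀ (l₁ l₂ : List (PTree V)) (x : PTree V →₀ k),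
        (Submodule.Quotient.mk (Finsupp.mapDomain (fun t => PTree.node v (l₁ ++ t :: l₂)) x) :
          TrSpace k V)
        = (slotLin_nodeT k v).slot (l₁.map (cls k)) (l₂.map (cls k))
            (Submodule.Quotient.mk x) := by
      intro l₁ l₂ x
      induction x using Finsupp.induction_linear with
      | zero => simp
      | add x y hx hy =>
        rw [Finsupp.mapDomain_add, Submodule.Quotient.mk_add, Submodule.Quotient.mk_add,
          map_add, hx, hy]
      | single t a =>
        have : ∀ t : PTree V, (Submodule.Quotient.mk (Finsupp.single t a) : TrSpace k V)
            = a • cls k t := fun t => by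
          rw [cls, ← Submodule.Quotient.mk_smul]; simp
        rw [Finsupp.mapDomain_single, this, this, map_smul, ← nodeT_map_cls]
        simp [SlotLin.slot]
    have hL : ∀ l₂ l₁ : List (PTree V), (∀ t ∈ l₂, graftR k (cls k s) (cls k t)
          = Submodule.Quotient.mk (graftF k s t)) →
        (Submodule.Quotient.mk (graftL k s l₂ (fun l => PTree.node v (l₁ ++ l))) : TrSpace k V)
        = derivL (graftR k (cls k s)) (fun l => nodeT k v (l₁.map (cls k) ++ l))
            (l₂.map (cls k)) := by
      intro l₂
      induction l₂ with
      | nil => intro _ _; simp [graftL, derivL]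
      | cons t l₂ ihl =>
        intro l₁ h
        have h' := ihl (l₁ ++ [t]) fun t' ht' => h t' (by simp [ht'])
        simp only [List.append_assoc, List.cons_append, List.nil_append, List.map_append,
          List.map_cons, List.map_nil] at h'
        simp only [graftL, List.map_cons, derivL]
        rw [Submodule.Quotient.mk_add, h', hplug, ← h t (by simp)]
        rfl
    rw [← nodeT_map_cls, graftR_nodeT, graftF, Submodule.Quotient.mk_add]
    have h := hL ts [] ih
    simp only [List.nil_append, List.map_nil] at h
    have h' := nodeT_map_cls k v (s :: ts)
    simp only [List.map_cons] at h'
    rw [h, h']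
    rfl

/-- An endomorphism of `(Tr(V), ⋆)` fixing the one-vertex trees is the identity: the
one-vertex trees generate. -/
theorem end_eq_id (F : TrSpace k V →ₗ[k] TrSpace k V) (hF : ∀ v, F (nodeT k v []) = nodeT k v [])
    (hm : ∀ x y, F (mulT k x y) = mulT k (F x) (F y)) (x : TrSpace k V) : F x = x := by
  let E := LinearMap.eqLocus F LinearMap.id
  have hE : ∀ x, x ∈ E ↔ F x = x := fun x => Iff.rfl
  have hmul : ∀ x ∈ E, ∀ y ∈ E, graftR k y x ∈ E := by
    intro x hx y hy
    rw [hE] at hx hy ⊢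
    have := hm x y
    rwa [hx, hy] at this
  -- `nodeT v (y :: l) = nodeT v l ⋆ y - ∑ nodeT v (… xᵢ ⋆ y …)` lowers the root degree
  have key : ∀ (n : ℕ) (v : V) (l : List (TrSpace k V)), l.length = n → (∀ x ∈ l, x ∈ E) →
      nodeT k v l ∈ E := by
    intro n
    induction n with
    | zero =>
      intro v l hl _
      rw [List.length_eq_zero_iff.1 hl]
      exact hF v
    | succ n ih =>
      intro v l hl h
      match l, hl with
      | y :: l, hl =>
        have hl' : l.length = n := by simpa using hl
        rw [← add_sub_cancel_right (nodeT k v (y :: l)) (derivL (graftR k y) (nodeT k v) l),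
          ← graftR_nodeT]
        have hy : y ∈ E := h y (by simp)
        refine E.sub_mem (hmul _ (ih v l hl' fun x hx => h x (by simp [hx])) _ hy) ?_
        refine derivL_mem (A := E) E.toAddSubgroup
          (fun x hx => ⟨h x (by simp [hx]), hmul _ (h x (by simp [hx])) _ hy⟩) ?_
        intro l' hl'' hA
        exact ih v l' (hl''.trans hl') hA
  exact nodeT_induction k E (fun v l hl => key _ v l rfl hl) x

end

/-! ### Symmetric braces in a pre-Lie algebra -/

section
variable {k : Type} [Field k] {Q : Type} [AddCommGroup Q] [Module k Q]

/-- The symmetric brace `x{y₁, …, yₙ}` of a pre-Lie algebra, given by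
`x{y, y₁, …, yₙ} = x{y₁, …, yₙ} · y - ∑ x{y₁, …, yᵢ · y, …, yₙ}`; it is `0` when the
list does not have length `n`. -/
def brace (m : Q →ₗ[k] Q →ₗ[k] Q) (x : Q) : ℕ → List Q → Q
  | 0, [] => x
  | 0, _ :: _ => 0
  | _ + 1, [] => 0
  | n + 1, y :: l => m (brace m x n l) y - derivL (fun z => m z y) (brace m x n) l

theorem slotLin_brace (m : Q →ₗ[k] Q →ₗ[k] Q) (x : Q) (n : ℕ) : SlotLin k (brace m x n) := by
  induction n with
  | zero =>
    constructor
    · intro l₁ l₂ y z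
      cases l₁ <;> simp [brace]
    · intro a l₁ l₂ y
      cases l₁ <;> simp [brace]
  | succ n ih =>
    constructor
    · intro l₁ l₂ y z
      cases l₁ with
      | nil =>
        simp only [List.nil_append, brace, map_add]
        rw [ih.derivL_fun_add]
        abel
      | cons w l₁ =>
        have := (ih.derivL (m.flip w)).add l₁ l₂ y z
        simp only [List.cons_append, brace]
        erw [this]
        simp only [ih.add, map_add, LinearMap.add_apply]
        change _ + _ - (derivL (fun z => m z w) _ _ + derivL (fun z => m z w) _ _) = _
        abel
    · intro a l₁ l₂ y
      cases l₁ with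
      | nil =>
        simp only [List.nil_append, brace, map_smul]
        rw [ih.derivL_fun_smul, smul_sub]
      | cons w l₁ =>
        have := (ih.derivL (m.flip w)).smul a l₁ l₂ y
        simp only [List.cons_append, brace]
        erw [this]
        simp only [ih.smul, map_smul, LinearMap.smul_apply, smul_sub]
        rfl

/-- Symmetry of the braces. For the first two entries this is the pre-Lie identity,
applied to `x{l}` and to each entry of `l`. -/
theorem permInv_brace (m : Q →ₗ[k] Q →ₗ[k] Q)
    (hm : ∀ x y z : Q, m (m x y) z - m x (m y z) = m (m x z) y - m x (m z y))
    (x : Q) (n : ℕ) : PermInv (brace m x n) := by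
  induction n with
  | zero =>
    intro l l' h
    cases l with
    | nil => rw [List.nil_perm.1 h]
    | cons y l =>
      cases l' with
      | nil => exact absurd h.symm (by simp)
      | cons y' l' => rfl
  | succ n ih =>
    intro l l' h
    induction h with
    | nil => rfl
    | trans _ _ ih₁ ih₂ => exact ih₁.trans ih₂
    | cons y h _ =>
      simp only [brace]
      rw [ih _ _ h, ih.derivL _ _ _ h]
    | swap y z l =>
      cases n with
      | zero => simp [brace, derivL, derivL_zero]
      | succ n =>
        have hn := slotLin_brace m x n
        have comp : ∀ y z : Q, brace m x (n + 2) (y :: z :: l)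
            = m (m (brace m x n l) z) y - m (brace m x n l) (m z y)
              - derivL (fun w => m w z) (fun l => m (brace m x n l) y) l
              - derivL (fun w => m w y) (fun l => m (brace m x n l) z) l
              + derivL (fun w => m w (m z y)) (brace m x n) l
              + derivL (fun w => m w y) (derivL (fun w => m w z) (brace m x n)) l := by
          intro y z
          have h := derivL_comp (fun w => m w z) (m.flip y).toAddMonoidHom (brace m x n) l
          simp only [LinearMap.toAddMonoidHom_coe, LinearMap.flip_apply] at h
          simp only [brace, derivL, derivL_sub, map_sub, LinearMap.sub_apply, h]
          abel
        have hcomm := derivL_comm (fun w => m w y) (fun w => m w z) (brace m x n) l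
        have hδ : derivL (fun w => m (m w y) z + m w (m z y)) (brace m x n) l
            = derivL (fun w => m (m w z) y + m w (m y z)) (brace m x n) l :=
          derivL_congr_left _ fun w _ => sub_eq_sub_iff_add_eq_add.1 (hm w y z)
        have hx := hm (brace m x n l) y z
        rw [hn.derivL_fun_add (fun w => m (m w y) z),
          hn.derivL_fun_add (fun w => m (m w z) y)] at hδ
        symm
        rw [comp y z, comp z y, hx]
        rw [← sub_eq_zero] at hcomm hδ ⊢
        rw [← add_zero (0 : Q)]
        nth_rewrite 1 [← hcomm]
        rw [← hδ]
        abel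

theorem brace_add (m : Q →ₗ[k] Q →ₗ[k] Q) (x x' : Q) (n : ℕ) (l : List Q) :
    brace m (x + x') n l = brace m x n l + brace m x' n l := by
  induction n generalizing l with
  | zero => cases l <;> simp [brace]
  | succ n ih =>
    cases l with
    | nil => simp [brace]
    | cons y l =>
      have : brace m (x + x') n = fun l => brace m x n l + brace m x' n l := funext ih
      simp only [brace, this, derivL_add, map_add, LinearMap.add_apply]
      abel

theorem brace_smul (m : Q →ₗ[k] Q →ₗ[k] Q) (a : k) (x : Q) (n : ℕ) (l : List Q) :
    brace m (a • x) n l = a • brace m x n l := by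
  induction n generalizing l with
  | zero => cases l <;> simp [brace]
  | succ n ih =>
    cases l with
    | nil => simp [brace]
    | cons y l =>
      have h : brace m (a • x) n = fun l => a • brace m x n l := funext ih
      have h' := derivL_comp (fun z => m z y) (DistribSMul.toAddMonoidHom Q a) (brace m x n) l
      simp only [DistribSMul.toAddMonoidHom_apply] at h'
      simp only [brace, h, map_smul, LinearMap.smul_apply, smul_sub, h']

end

/-! ### Universal property of `Tr(V)` -/

section
variable (k : Type) {V : Type} [Field k] [AddCommGroup V] [Module k V]

/-- Linear maps from `V` to a pre-Lie algebra extend to morphisms on `Tr(V)`: a tree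
is evaluated by interpreting each vertex as a symmetric brace. -/
theorem exists_lift {Q : Type} [AddCommGroup Q] [Module k Q] (m : Q →ₗ[k] Q →ₗ[k] Q)
    (hm : ∀ x y z : Q, m (m x y) z - m x (m y z) = m (m x z) y - m x (m z y))
    (f : V →ₗ[k] Q) :
    ∃ g : TrSpace k V →ₗ[k] Q, (∀ v, g (nodeT k v []) = f v) ∧
      ∀ x y, g (mulT k x y) = m (g x) (g y) := by
  obtain ⟨g, hg⟩ := exists_fold k (fun v l => brace m (f v) l.length l)
    (fun v => ⟨fun l₁ l₂ x y => by
        simp only [List.length_append, List.length_cons]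
        exact (slotLin_brace m (f v) _).add l₁ l₂ x y,
      fun a l₁ l₂ x => by
        simp only [List.length_append, List.length_cons]
        exact (slotLin_brace m (f v) _).smul a l₁ l₂ x⟩)
    (fun v l l' h => by
      change brace m (f v) l.length l = brace m (f v) l'.length l'
      rw [h.length_eq]
      exact permInv_brace m hm _ _ _ _ h)
    (fun v w l => by simp only [map_add, brace_add])
    (fun a v l => by simp only [map_smul, brace_smul])
  refine ⟨g, fun v => by rw [hg]; rfl, fun x y => ?_⟩
  rw [mulT_apply]
  refine nodeT_induction k (LinearMap.eqLocus (g.comp (graftR k y)) ((m.flip (g y)).comp g))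
    (fun v l hl => ?_) x
  change g (graftR k y (nodeT k v l)) = m (g (nodeT k v l)) (g y)
  have h₁ := derivL_comp (graftR k y) g.toAddMonoidHom (nodeT k v) l
  simp only [LinearMap.toAddMonoidHom_coe, hg] at h₁
  have h₂ := derivL_map (δ := graftR k y) (δ' := fun z => m z (g y)) g
    (fun l => brace m (f v) l.length l) (l := l) hl
  have h₃ : derivL (fun z => m z (g y)) (fun l => brace m (f v) l.length l) (l.map g)
      = derivL (fun z => m z (g y)) (brace m (f v) l.length) (l.map g) :=
    derivL_congr_right _ fun l' hl' => by
      rw [hl', List.length_map]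
  rw [graftR_nodeT, map_add, h₁, h₂, h₃, hg, hg]
  simp only [List.map_cons, List.length_cons, List.length_map, brace]
  abel

end

end FreePreLie

/-- Chapoton–Livernet: the free pre-Lie algebra `pL(V)` on a vector space `V` is
naturally isomorphic to the space `Tr(V)` of `V`-decorated rooted trees, the
pre-Lie product being given by grafting (vertex insertion): the isomorphism sends
`v` to the one-vertex tree decorated by `v`, and the product of elements
represented by trees `t, s` to the grafting sum `graftF k s t`. -/
theorem free_preLie_iso_trees {k V P : Type} [Field k] [CharZero k]
    [AddCommGroup V] [Module k V] [AddCommGroup P] [Module k P]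
    (mul : P →ₗ[k] P →ₗ[k] P) (ι : V →ₗ[k] P)
    (h : IsFreePreLie k V P mul ι) :
    ∃ e : P ≃ₗ[k] TrSpace k V,
      (∀ v : V,
        e (ι v) = Submodule.Quotient.mk (Finsupp.single (PTree.node v []) 1)) ∧
      ∀ (x y : P) (t s : PTree V),
        e x = Submodule.Quotient.mk (Finsupp.single t 1) →
        e y = Submodule.Quotient.mk (Finsupp.single s 1) →
        e (mul x y) = Submodule.Quotient.mk (graftF k s t) := by
  obtain ⟨g, hgι, hgm⟩ := FreePreLie.exists_lift k mul h.preLie ι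
  obtain ⟨e, ⟨heι, hem⟩, -⟩ := h.lift (TrSpace k V) (FreePreLie.mulT k)
    (FreePreLie.mulT_preLie k)
    { toFun := fun v => FreePreLie.nodeT k v []
      map_add' := fun v w => FreePreLie.nodeT_add k v w []
      map_smul' := fun a v => FreePreLie.nodeT_smul k a v [] }
  simp only [LinearMap.coe_mk, AddHom.coe_mk] at heι
  have hge : g.comp e = LinearMap.id := by
    refine (h.lift P mul h.preLie ι).unique ⟨fun v => ?_, fun x y => ?_⟩
      ⟨fun _ => rfl, fun _ _ => rfl⟩
    · rw [LinearMap.comp_apply, heι, hgι]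
    · rw [LinearMap.comp_apply, hem, hgm]; rfl
  have heg : e.comp g = LinearMap.id := LinearMap.ext <|
    FreePreLie.end_eq_id k (e.comp g)
      (fun v => by rw [LinearMap.comp_apply, hgι, heι])
      (fun x y => by rw [LinearMap.comp_apply, hgm, hem]; rfl)
  refine ⟨LinearEquiv.ofLinearMap e g heg hge, heι, fun x y t s hx hy => ?_⟩
  change e x = FreePreLie.cls k t at hx
  change e y = FreePreLie.cls k s at hy
  change e (mul x y) = _
  rw [hem, hx, hy, FreePreLie.mulT_apply, FreePreLie.graftR_cls]
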